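/- arXiv:2605.00667 — 5 statements merged into one kernel-verified Lean document; each statement's English description precedes it below -/
import Mathlib

section
/- Under Assumptions 1–3, if the policy space Π is a nonempty, bounded, convex, strongly closed subset of a real Hilbert space, the dual optimal set Ω* = {λ ∈ H₊ : d(λ) ≥ d(μ) for all μ ∈ H₊} is nonempty, and the ALaM iterates are well defined for all k (the argmin defining π^{k+1} exists), then the multiplier sequence {λᵏ} converges weakly in H to some dual optimal solution λ* ∈ Ω*. -/
open MeasureTheory Filter
open scoped RealInnerProductSpace

theorem aux_inner_nonneg {α : Type*} [MeasurableSpace α] {μ : Measure α} (f g : Lp ℝ 2 μ)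
    (hf : 0 ≤ᵐ[μ] ⇑f) (hg : 0 ≤ᵐ[μ] ⇑g) : 0 ≤ ⟪f, g⟫ := by
  rw [L2.inner_def]
  apply integral_nonneg_of_ae
  filter_upwards [hf, hg] with x h1 h2
  simp only [Pi.zero_apply] at *
  simpa using mul_nonneg h2 h1

theorem aux_posPart_nonneg {α : Type*} [MeasurableSpace α] {μ : Measure α} (f : Lp ℝ 2 μ) :
    0 ≤ᵐ[μ] ⇑(Lp.posPart f) := by
  filter_upwards [Lp.coeFn_posPart f] with x h
  rw [h]; simp

theorem aux_posPart_sub_nonneg {α : Type*} [MeasurableSpace α] {μ : Measure α} (f : Lp ℝ 2 μ) :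
    0 ≤ᵐ[μ] ⇑(Lp.posPart f - f) := by
  filter_upwards [Lp.coeFn_posPart f, Lp.coeFn_sub (Lp.posPart f) f] with x h h2
  rw [h2]; simp [h]

theorem aux_inner_posPart {α : Type*} [MeasurableSpace α] {μ : Measure α} (f : Lp ℝ 2 μ) :
    ⟪Lp.posPart f, Lp.posPart f - f⟫ = 0 := by
  rw [L2.inner_def]
  apply integral_eq_zero_of_ae
  filter_upwards [Lp.coeFn_posPart f, Lp.coeFn_sub (Lp.posPart f) f] with x h h2
  rw [h2]
  simp only [Pi.sub_apply, h, Pi.zero_apply]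
  rcases le_total (f x) 0 with h3 | h3 <;> simp [h3]

theorem aux_norm_le {α : Type*} [MeasurableSpace α] {μ : Measure α} (v w h : Lp ℝ 2 μ)
    (hv : ⇑v ≤ᵐ[μ] ⇑(w + h)) : ‖Lp.posPart v‖ ≤ ‖Lp.posPart w + h‖ := by
  apply Lp.norm_le_norm_of_ae_le
  filter_upwards [hv, Lp.coeFn_posPart v, Lp.coeFn_posPart w, Lp.coeFn_add w h,
    Lp.coeFn_add (Lp.posPart w) h] with x h1 h2 h3 h4 h5
  rw [h2, h5]
  rw [h4] at h1
  simp only [Pi.add_apply, h3] at *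
  rw [Real.norm_eq_abs, Real.norm_eq_abs, abs_of_nonneg (le_max_right _ _)]
  apply max_le _ (abs_nonneg _)
  exact (h1.trans (by gcongr; exact le_max_left _ _)).trans (le_abs_self _)

theorem aux_nonneg_of_inner {α : Type*} [MeasurableSpace α] {μ : Measure α} (a : Lp ℝ 2 μ)
    (h : ∀ m : Lp ℝ 2 μ, 0 ≤ᵐ[μ] ⇑m → 0 ≤ ⟪a, m⟫) : 0 ≤ᵐ[μ] ⇑a := by
  have h1 := h _ (aux_posPart_sub_nonneg a)
  have h2 := aux_inner_posPart a
  have h3 : ⟪Lp.posPart a - a, Lp.posPart a - a⟫ ≤ 0 := by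
    rw [inner_sub_left]; linarith
  have h4 : Lp.posPart a - a = 0 := inner_self_eq_zero.mp (le_antisymm h3 real_inner_self_nonneg)
  have h5 := aux_posPart_nonneg a
  rwa [sub_eq_zero.mp h4] at h5

theorem aux_weak_cluster {H : Type*} [NormedAddCommGroup H] [InnerProductSpace ℝ H]
    [CompleteSpace H] (u : ℕ → H) (R : ℝ) (hR : ∀ k, ‖u k‖ ≤ R) (U : Ultrafilter ℕ) :
    ∃ a : H, ∀ z : H, Tendsto (fun k => ⟪u k, z⟫) U (nhds ⟪a, z⟫) := by
  have hc := WeakDual.isCompact_closedBall (𝕜 := ℝ) (0 : StrongDual ℝ H) R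
  let f : ℕ → WeakDual ℝ H := fun k => StrongDual.toWeakDual (InnerProductSpace.toDual ℝ H (u k))
  obtain ⟨φ, -, hφ⟩ := hc.ultrafilter_le_nhds (U.map f) (by
    simp only [Ultrafilter.coe_map, le_principal_iff, mem_map]
    refine Filter.univ_mem' fun k => ?_
    simp only [f, Set.mem_preimage, mem_closedBall_zero_iff]
    change ‖InnerProductSpace.toDual ℝ H (u k)‖ ≤ R
    simpa using hR k)
  refine ⟨(InnerProductSpace.toDual ℝ H).symm (WeakDual.toStrongDual φ), fun z => ?_⟩
  rw [InnerProductSpace.toDual_symm_apply]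
  have h2 : Tendsto f U (nhds φ) := hφ
  exact ((WeakDual.eval_continuous z).tendsto φ).comp h2

/-- Opial-type argument along ultrafilters. -/
theorem aux_opial {H : Type*} [NormedAddCommGroup H] [InnerProductSpace ℝ H]
    [CompleteSpace H] (u : ℕ → H) (S : Set H) (hS : S.Nonempty)
    (hmono : ∀ s ∈ S, ∀ k, ‖u (k + 1) - s‖ ≤ ‖u k - s‖)
    (hclus : ∀ (U : Ultrafilter ℕ) (a : H), (U : Filter ℕ) ≤ atTop →
      (∀ z : H, Tendsto (fun k => ⟪u k, z⟫) U (nhds ⟪a, z⟫)) → a ∈ S) :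
    ∃ a ∈ S, ∀ z : H, Tendsto (fun k => ⟪u k, z⟫) atTop (nhds ⟪a, z⟫) := by
  have hanti : ∀ s ∈ S, Antitone (fun k => ‖u k - s‖) := fun s hs =>
    antitone_nat_of_succ_le (hmono s hs)
  have hlim : ∀ s ∈ S, ∃ l, Tendsto (fun k => ‖u k - s‖) atTop (nhds l) := fun s hs =>
    ⟨_, tendsto_atTop_ciInf (hanti s hs) ⟨0, by rintro _ ⟨k, rfl⟩; exact norm_nonneg _⟩⟩
  obtain ⟨s0, hs0⟩ := hS
  have hR : ∀ k, ‖u k‖ ≤ ‖u 0 - s0‖ + ‖s0‖ := fun k => by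
    have h1 := hanti s0 hs0 (Nat.zero_le k)
    have h2 := norm_add_le (u k - s0) s0
    simp only [sub_add_cancel] at h1 h2
    linarith
  have huniq : ∀ (U V : Ultrafilter ℕ) (a b : H), (U : Filter ℕ) ≤ atTop →
      (V : Filter ℕ) ≤ atTop →
      (∀ z : H, Tendsto (fun k => ⟪u k, z⟫) U (nhds ⟪a, z⟫)) →
      (∀ z : H, Tendsto (fun k => ⟪u k, z⟫) V (nhds ⟪b, z⟫)) → a = b := by
    intro U V a b hU hV ha hb
    obtain ⟨l, hl⟩ := hlim a (hclus U a hU ha)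
    obtain ⟨l', hl'⟩ := hlim b (hclus V b hV hb)
    have hconv : Tendsto (fun k => ⟪u k, a - b⟫) atTop
        (nhds ((l' ^ 2 - l ^ 2 + ‖a‖ ^ 2 - ‖b‖ ^ 2) / 2)) := by
      have := ((((hl'.pow 2).sub (hl.pow 2)).add_const (‖a‖ ^ 2)).sub_const (‖b‖ ^ 2)).div_const 2
      refine this.congr fun k => ?_
      rw [norm_sub_sq_real, norm_sub_sq_real, inner_sub_right]
      ring
    have e1 := tendsto_nhds_unique (ha (a - b)) (hconv.mono_left hU)
    have e2 := tendsto_nhds_unique (hb (a - b)) (hconv.mono_left hV)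
    have e3 : ⟪a - b, a - b⟫ = 0 := by rw [inner_sub_left, e1, e2, sub_self]
    exact sub_eq_zero.mp (inner_self_eq_zero.mp e3)
  let U0 : Ultrafilter ℕ := Ultrafilter.of atTop
  have hU0 : (U0 : Filter ℕ) ≤ atTop := Ultrafilter.of_le _
  obtain ⟨a, ha⟩ := aux_weak_cluster u _ hR U0
  refine ⟨a, hclus U0 a hU0 ha, fun z => ?_⟩
  rw [tendsto_iff_ultrafilter]
  intro V hV
  obtain ⟨b, hb⟩ := aux_weak_cluster u _ hR V
  rw [huniq U0 V a b hU0 hV ha hb]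
  exact hb z

/-- under Assumptions 1–3, with `Π` a nonempty, bounded, convex, strongly
closed subset of a real Hilbert space, a nonempty dual optimal set
`Ω* = {λ ∈ H₊ : d(λ) ≥ d(m) ∀ m ∈ H₊}`, and well-defined ALaM iterates
(`π^{k+1} ∈ argmin_Π L(·, λᵏ, ρᵏ)`, `λ^{k+1} = max{0, λᵏ + ρᵏ F(π^{k+1})}`,
`0 < ρ₀ ≤ ρᵏ ≤ ρ_max`), the multiplier sequence `{λᵏ}` converges weakly in `H = L²(μ)` to
some dual optimal solution `λ* ∈ Ω*`. -/
theorem stmt_0 {α : Type*} [MeasurableSpace α] {μ : Measure α}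
    {E : Type*} [NormedAddCommGroup E] [InnerProductSpace ℝ E] [CompleteSpace E]
    (Pi : Set E) (J : E → ℝ) (F : E → Lp ℝ 2 μ)
    -- `Π` nonempty, bounded, convex, strongly closed
    (hne : Pi.Nonempty) (hbdd : Bornology.IsBounded Pi) (hPiconv : Convex ℝ Pi)
    (hclosed : IsClosed Pi)
    -- Assumption 1 (boundedness)
    (MJ MF : ℝ) (hMJ : ∀ π ∈ Pi, |J π| ≤ MJ) (hMF : ∀ π ∈ Pi, ‖F π‖ ≤ MF)
    -- Assumption 2 (strong continuity along weakly convergent sequences)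
    (hcont : ∀ (πseq : ℕ → E) (π : E), (∀ n, πseq n ∈ Pi) → π ∈ Pi →
      (∀ z : E, Tendsto (fun n => ⟪πseq n, z⟫) atTop (nhds ⟪π, z⟫)) →
      Tendsto (fun n => J (πseq n)) atTop (nhds (J π)) ∧
        Tendsto (fun n => ‖F (πseq n) - F π‖) atTop (nhds 0))
    -- Assumption 3 (convexity)
    (hJconc : ∀ π₁ ∈ Pi, ∀ π₂ ∈ Pi, ∀ t : ℝ, 0 ≤ t → t ≤ 1 →
      t * J π₁ + (1 - t) * J π₂ ≤ J (t • π₁ + (1 - t) • π₂))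
    (hFconv : ∀ π₁ ∈ Pi, ∀ π₂ ∈ Pi, ∀ t : ℝ, 0 ≤ t → t ≤ 1 →
      ∀ᵐ x ∂μ, F (t • π₁ + (1 - t) • π₂) x ≤ t * F π₁ x + (1 - t) * F π₂ x)
    -- dual function
    (d : Lp ℝ 2 μ → ℝ)
    (hd : ∀ lam : Lp ℝ 2 μ, d lam = sInf ((fun π => -J π + ⟪lam, F π⟫) '' Pi))
    -- the dual optimal set `Ω*` is nonempty
    (hdualopt : ∃ lam : Lp ℝ 2 μ, (0 ≤ᵐ[μ] ⇑lam) ∧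
      ∀ m : Lp ℝ 2 μ, (0 ≤ᵐ[μ] ⇑m) → d m ≤ d lam)
    -- ALaM iterates
    (lam : ℕ → Lp ℝ 2 μ) (πseq : ℕ → E) (ρ : ℕ → ℝ) (ρ₀ ρmax : ℝ)
    (hρ₀ : 0 < ρ₀) (hρ : ∀ k, ρ₀ ≤ ρ k ∧ ρ k ≤ ρmax)
    (hlam0 : 0 ≤ᵐ[μ] ⇑(lam 0))
    (hπPi : ∀ k : ℕ, πseq (k + 1) ∈ Pi)
    (hπmin : ∀ k : ℕ, ∀ π ∈ Pi,
      -J (πseq (k + 1))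
          + 1 / (2 * ρ k) * ‖Lp.posPart (lam k + ρ k • F (πseq (k + 1)))‖ ^ 2
          - 1 / (2 * ρ k) * ‖lam k‖ ^ 2
        ≤ -J π + 1 / (2 * ρ k) * ‖Lp.posPart (lam k + ρ k • F π)‖ ^ 2
          - 1 / (2 * ρ k) * ‖lam k‖ ^ 2)
    (hlamupd : ∀ k : ℕ, lam (k + 1) = Lp.posPart (lam k + ρ k • F (πseq (k + 1)))) :
    ∃ lamstar : Lp ℝ 2 μ, (0 ≤ᵐ[μ] ⇑lamstar) ∧
      (∀ m : Lp ℝ 2 μ, (0 ≤ᵐ[μ] ⇑m) → d m ≤ d lamstar) ∧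
      ∀ z : Lp ℝ 2 μ, Tendsto (fun k => ⟪lam k, z⟫) atTop (nhds ⟪lamstar, z⟫) := by
  have hρpos : ∀ k, 0 < ρ k := fun k => lt_of_lt_of_le hρ₀ (hρ k).1
  -- basic facts on the dual function
  have hBdd : ∀ m : Lp ℝ 2 μ, BddBelow ((fun π => -J π + ⟪m, F π⟫) '' Pi) := by
    intro m
    refine ⟨-MJ - ‖m‖ * MF, ?_⟩
    rintro _ ⟨π, hπ, rfl⟩
    have h1 := (abs_le.mp (hMJ π hπ)).2
    have h2 := (abs_le.mp (abs_real_inner_le_norm m (F π))).1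
    have h3 := mul_le_mul_of_nonneg_left (hMF π hπ) (norm_nonneg m)
    simp only
    linarith
  have hd_le : ∀ m : Lp ℝ 2 μ, ∀ π ∈ Pi, d m ≤ -J π + ⟪m, F π⟫ := by
    intro m π hπ
    rw [hd]
    exact csInf_le (hBdd m) ⟨π, hπ, rfl⟩
  have hle_d : ∀ (m : Lp ℝ 2 μ) (c : ℝ), (∀ π ∈ Pi, c ≤ -J π + ⟪m, F π⟫) → c ≤ d m := by
    intro m c h
    rw [hd]
    apply le_csInf (hne.image _)
    rintro _ ⟨π, hπ, rfl⟩
    exact h π hπ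
  have hlampos : ∀ k, 0 ≤ᵐ[μ] ⇑(lam k) := by
    intro k
    cases k with
    | zero => exact hlam0
    | succ k => rw [hlamupd]; exact aux_posPart_nonneg _
  -- the primal iterate minimizes the Lagrangian at the new multiplier
  have hkey : ∀ k, ∀ π ∈ Pi, -J (πseq (k + 1)) + ⟪lam (k + 1), F (πseq (k + 1))⟫
      ≤ -J π + ⟪lam (k + 1), F π⟫ := by
    intro k π hπ
    have hr := hρpos k
    set p := πseq (k + 1) with hp
    have hpPi : p ∈ Pi := hπPi k
    have hstep : ∀ t : ℝ, 0 < t → t ≤ 1 →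
        J π - J p ≤ ⟪lam (k + 1), F π - F p⟫ + t * (ρ k / 2 * ‖F π - F p‖ ^ 2) := by
      intro t ht ht1
      have hmem : t • π + (1 - t) • p ∈ Pi :=
        hPiconv hπ hpPi ht.le (by linarith) (by ring)
      have h1 := hπmin k _ hmem
      rw [← hlamupd k] at h1
      have h2 := hJconc π hπ p hpPi t ht.le ht1
      have h3 : ‖Lp.posPart (lam k + ρ k • F (t • π + (1 - t) • p))‖
          ≤ ‖lam (k + 1) + (ρ k * t) • (F π - F p)‖ := by
        rw [hlamupd k]
        apply aux_norm_le
        filter_upwards [hFconv π hπ p hpPi t ht.le ht1,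
          Lp.coeFn_add (lam k) (ρ k • F (t • π + (1 - t) • p)),
          Lp.coeFn_smul (ρ k) (F (t • π + (1 - t) • p)),
          Lp.coeFn_add (lam k + ρ k • F p) ((ρ k * t) • (F π - F p)),
          Lp.coeFn_add (lam k) (ρ k • F p),
          Lp.coeFn_smul (ρ k) (F p),
          Lp.coeFn_smul (ρ k * t) (F π - F p),
          Lp.coeFn_sub (F π) (F p)] with x a0 a1 a2 a3 a4 a5 a6 a7
        rw [a1, a3]
        simp only [_root_.Pi.add_apply, a2, a4, a5, a6, _root_.Pi.smul_apply, a7,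
          _root_.Pi.sub_apply, smul_eq_mul]
        have := mul_le_mul_of_nonneg_left a0 hr.le
        linarith
      have h4 : ‖Lp.posPart (lam k + ρ k • F (t • π + (1 - t) • p))‖ ^ 2
          ≤ ‖lam (k + 1)‖ ^ 2 + 2 * (ρ k * t * ⟪lam (k + 1), F π - F p⟫)
            + (ρ k * t) ^ 2 * ‖F π - F p‖ ^ 2 := by
        have h5 := pow_le_pow_left₀ (norm_nonneg _) h3 2
        rw [norm_add_sq_real, inner_smul_right, norm_smul, mul_pow, Real.norm_eq_abs,
          sq_abs] at h5
        exact h5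
      have h6 := mul_le_mul_of_nonneg_left h4 (by positivity : 0 ≤ 1 / (2 * ρ k))
      have h7 : 1 / (2 * ρ k) * (‖lam (k + 1)‖ ^ 2
            + 2 * (ρ k * t * ⟪lam (k + 1), F π - F p⟫)
            + (ρ k * t) ^ 2 * ‖F π - F p‖ ^ 2)
          = 1 / (2 * ρ k) * ‖lam (k + 1)‖ ^ 2 + t * (⟪lam (k + 1), F π - F p⟫
            + t * (ρ k / 2 * ‖F π - F p‖ ^ 2)) := by
        field_simp
        ring
      have h8 : t * (J π - J p) ≤ t * (⟪lam (k + 1), F π - F p⟫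
            + t * (ρ k / 2 * ‖F π - F p‖ ^ 2)) := by linarith
      exact le_of_mul_le_mul_left h8 ht
    have hlim : J π - J p ≤ ⟪lam (k + 1), F π - F p⟫ := by
      have hT : Tendsto (fun t : ℝ => ⟪lam (k + 1), F π - F p⟫
          + t * (ρ k / 2 * ‖F π - F p‖ ^ 2)) (nhdsWithin 0 (Set.Ioi 0))
          (nhds (⟪lam (k + 1), F π - F p⟫ + 0 * (ρ k / 2 * ‖F π - F p‖ ^ 2))) :=
        (Continuous.tendsto (by fun_prop) 0).mono_left nhdsWithin_le_nhds
      rw [zero_mul, add_zero] at hT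
      refine ge_of_tendsto hT ?_
      filter_upwards [Ioc_mem_nhdsGT (zero_lt_one' ℝ)] with t ht
      exact hstep t ht.1 ht.2
    rw [inner_sub_right] at hlim
    linarith
  -- proximal inequality
  have hprox : ∀ k, ∀ m : Lp ℝ 2 μ, 0 ≤ᵐ[μ] ⇑m →
      2 * (ρ k * (d m - d (lam (k + 1)))) ≤
        ‖lam k - m‖ ^ 2 - ‖lam (k + 1) - m‖ ^ 2 := by
    intro k m hm
    have hr := hρpos k
    have h1 := hd_le m _ (hπPi k)
    have h2 := hle_d (lam (k + 1)) _ (hkey k)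
    have h3 : d m - d (lam (k + 1)) ≤ ⟪m - lam (k + 1), F (πseq (k + 1))⟫ := by
      rw [inner_sub_left]; linarith
    have h4 := mul_le_mul_of_nonneg_left h3 hr.le
    have h5 := aux_inner_nonneg _ _ hm
      (aux_posPart_sub_nonneg (lam k + ρ k • F (πseq (k + 1))))
    have h6 := aux_inner_posPart (lam k + ρ k • F (πseq (k + 1)))
    rw [← hlamupd k] at h5 h6
    have h7 : 0 ≤ ⟪m - lam (k + 1), lam (k + 1) - (lam k + ρ k • F (πseq (k + 1)))⟫ := by
      rw [inner_sub_left]; linarith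
    rw [← sub_sub, inner_sub_right, inner_smul_right] at h7
    have h8 : ‖lam k - m‖ ^ 2 - ‖lam (k + 1) - m‖ ^ 2
        = ‖lam (k + 1) - lam k‖ ^ 2 + 2 * ⟪m - lam (k + 1), lam (k + 1) - lam k⟫ := by
      have e : lam k - m = -((lam (k + 1) - lam k) + (m - lam (k + 1))) := by abel
      rw [e, norm_neg, norm_add_sq_real, norm_sub_rev m, real_inner_comm]
      ring
    have h9 := sq_nonneg ‖lam (k + 1) - lam k‖
    linarith
  let S : Set (Lp ℝ 2 μ) := {l | (0 ≤ᵐ[μ] ⇑l) ∧ ∀ m : Lp ℝ 2 μ, (0 ≤ᵐ[μ] ⇑m) → d m ≤ d l}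
  have hmono : ∀ s ∈ S, ∀ k, ‖lam (k + 1) - s‖ ≤ ‖lam k - s‖ := by
    rintro s ⟨hs0, hs⟩ k
    have h1 := hprox k s hs0
    have h2 := mul_nonneg (hρpos k).le (sub_nonneg.mpr (hs _ (hlampos (k + 1))))
    exact le_of_sq_le_sq (by linarith) (norm_nonneg _)
  obtain ⟨l0, hl0, hl0opt⟩ := hdualopt
  have hdlim : Tendsto (fun k => d (lam k)) atTop (nhds (d l0)) := by
    rw [← tendsto_add_atTop_iff_nat 1]
    have hanti : Antitone (fun k => ‖lam k - l0‖) :=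
      antitone_nat_of_succ_le (hmono l0 ⟨hl0, hl0opt⟩)
    have hl := tendsto_atTop_ciInf hanti ⟨0, by rintro _ ⟨k, rfl⟩; exact norm_nonneg _⟩
    have hl1 := (tendsto_add_atTop_iff_nat 1).mpr hl
    have hdiff := ((hl.pow 2).sub (hl1.pow 2)).div_const (2 * ρ₀)
    rw [sub_self, zero_div] at hdiff
    have hlow := (tendsto_const_nhds (x := d l0)).sub hdiff
    rw [sub_zero] at hlow
    refine tendsto_of_tendsto_of_tendsto_of_le_of_le hlow tendsto_const_nhds ?_ ?_
    · intro k
      have h1 := hprox k l0 hl0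
      have h2 : 0 ≤ d l0 - d (lam (k + 1)) := sub_nonneg.mpr (hl0opt _ (hlampos (k + 1)))
      have h3 := mul_le_mul_of_nonneg_right (hρ k).1 h2
      have h4 : d l0 - d (lam (k + 1)) ≤
          (‖lam k - l0‖ ^ 2 - ‖lam (k + 1) - l0‖ ^ 2) / (2 * ρ₀) := by
        rw [le_div_iff₀ (by positivity)]
        linarith
      simp only
      linarith
    · intro k
      exact hl0opt _ (hlampos (k + 1))
  obtain ⟨a, ⟨ha0, ha⟩, hlim⟩ := aux_opial lam S ⟨l0, hl0, hl0opt⟩ hmono (by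
    intro U a hU hUa
    refine ⟨aux_nonneg_of_inner a fun m hm =>
      ge_of_tendsto' (hUa m) fun k => aux_inner_nonneg _ _ (hlampos k) hm, fun m hm => ?_⟩
    refine (hl0opt m hm).trans (hle_d a _ fun π hπ => ?_)
    exact le_of_tendsto_of_tendsto' (hdlim.mono_left hU) ((hUa (F π)).const_add (-J π))
      fun k => hd_le (lam k) π hπ)
  exact ⟨a, ha0, ha, hlim⟩
end

section
/- Under Assumptions 1–3, suppose π′ ∈ Π minimizes the augmented Lagrangian π ↦ L(π, λ, ρ) = −J(π) + (1/(2ρ))‖max{0, λ + ρF(π)}‖² − (1/(2ρ))‖λ‖² over Π for some λ ∈ H₊ and ρ > 0, and set λ′ = max{0, λ + ρF(π′)} (pointwise positive part). Then −F(π′) is a subgradient of −d at λ′: for every μ ∈ H, −d(μ) ≥ −d(λ′) + ⟨−F(π′), μ − λ′⟩. -/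
open MeasureTheory Filter
open scoped RealInnerProductSpace

/-- Pointwise bound for the positive part along a convex combination. -/
lemma posPart_norm_aux {α : Type*} [MeasurableSpace α] {μ : Measure α}
    (lam f g h : Lp ℝ 2 μ) (ρ t : ℝ) (hρ : 0 < ρ)
    (hh : ∀ᵐ x ∂μ, h x ≤ t * f x + (1 - t) * g x) :
    ‖Lp.posPart (lam + ρ • h)‖ ≤ ‖Lp.posPart (lam + ρ • g) + (t * ρ) • (f - g)‖ := by
  apply Lp.norm_le_norm_of_ae_le
  filter_upwards [hh, Lp.coeFn_posPart (lam + ρ • h), Lp.coeFn_posPart (lam + ρ • g),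
    Lp.coeFn_add (Lp.posPart (lam + ρ • g)) ((t * ρ) • (f - g)),
    Lp.coeFn_smul (t * ρ) (f - g), Lp.coeFn_sub f g, Lp.coeFn_add lam (ρ • h),
    Lp.coeFn_add lam (ρ • g), Lp.coeFn_smul ρ h, Lp.coeFn_smul ρ g]
    with x h0 h1 h2 h3 h4 h5 h6 h7 h8 h9
  rw [h1, h3, Pi.add_apply, h2, h4, Pi.smul_apply, h5, Pi.sub_apply, h6, h7, Pi.add_apply,
    Pi.add_apply, h8, h9, Pi.smul_apply, Pi.smul_apply]
  simp only [smul_eq_mul, Real.norm_eq_abs]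
  rw [abs_of_nonneg (le_max_right _ _)]
  apply max_le _ (abs_nonneg _)
  refine le_trans ?_ (le_abs_self _)
  have h10 := le_max_left (lam x + ρ * g x) 0
  have h11 := mul_le_mul_of_nonneg_left h0 hρ.le
  nlinarith

lemma limit_aux (A C : ℝ) (hC : 0 ≤ C)
    (h : ∀ t : ℝ, 0 < t → t ≤ 1 → 0 ≤ t * A + t ^ 2 * C) : 0 ≤ A := by
  by_contra! hA
  have hp : 0 < C - A := by linarith
  have ht : 0 < -A / (C - A) := div_pos (by linarith) hp
  have h1 := h (-A / (C - A)) ht (by rw [div_le_one hp]; linarith)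
  set t := -A / (C - A) with htd
  have h2 : t * (C - A) = -A := by rw [htd]; field_simp
  have h3 : t * A + t ^ 2 * C = t * (t * A) := by linear_combination t * h2
  rw [h3] at h1
  nlinarith [mul_pos ht ht]

/-- under Assumptions 1–3, if `π'` minimizes the augmented Lagrangian
`π ↦ -J(π) + (1/(2ρ))‖max{0, λ + ρF(π)}‖² - (1/(2ρ))‖λ‖²` over `Π` for some `λ ∈ H₊` and
`ρ > 0`, and `λ' = max{0, λ + ρF(π')}` (pointwise positive part), then `-F(π')` is a
subgradient of `-d` at `λ'`: `-d(m) ≥ -d(λ') + ⟪-F(π'), m - λ'⟫` for every `m ∈ H`. -/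
theorem stmt_3 {α : Type*} [MeasurableSpace α] {μ : Measure α}
    {E : Type*} [NormedAddCommGroup E] [InnerProductSpace ℝ E] [CompleteSpace E]
    (Pi : Set E) (J : E → ℝ) (F : E → Lp ℝ 2 μ)
    -- Assumption 1 (boundedness)
    (MJ MF : ℝ) (hMJ : ∀ π ∈ Pi, |J π| ≤ MJ) (hMF : ∀ π ∈ Pi, ‖F π‖ ≤ MF)
    -- Assumption 2 (strong continuity along weakly convergent sequences)
    (hcont : ∀ (πseq : ℕ → E) (π : E), (∀ n, πseq n ∈ Pi) → π ∈ Pi →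
      (∀ z : E, Tendsto (fun n => ⟪πseq n, z⟫) atTop (nhds ⟪π, z⟫)) →
      Tendsto (fun n => J (πseq n)) atTop (nhds (J π)) ∧
        Tendsto (fun n => ‖F (πseq n) - F π‖) atTop (nhds 0))
    -- Assumption 3 (convexity)
    (hPiconv : Convex ℝ Pi)
    (hJconc : ∀ π₁ ∈ Pi, ∀ π₂ ∈ Pi, ∀ t : ℝ, 0 ≤ t → t ≤ 1 →
      t * J π₁ + (1 - t) * J π₂ ≤ J (t • π₁ + (1 - t) • π₂))
    (hFconv : ∀ π₁ ∈ Pi, ∀ π₂ ∈ Pi, ∀ t : ℝ, 0 ≤ t → t ≤ 1 →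
      ∀ᵐ x ∂μ, F (t • π₁ + (1 - t) • π₂) x ≤ t * F π₁ x + (1 - t) * F π₂ x)
    -- dual function
    (d : Lp ℝ 2 μ → ℝ)
    (hd : ∀ lam : Lp ℝ 2 μ, d lam = sInf ((fun π => -J π + ⟪lam, F π⟫) '' Pi))
    -- data of the statement
    (lam : Lp ℝ 2 μ) (hlam : 0 ≤ᵐ[μ] ⇑lam) (ρ : ℝ) (hρ : 0 < ρ)
    (pi' : E) (hpi'Pi : pi' ∈ Pi)
    (hmin : ∀ π ∈ Pi,
      -J pi' + 1 / (2 * ρ) * ‖Lp.posPart (lam + ρ • F pi')‖ ^ 2 - 1 / (2 * ρ) * ‖lam‖ ^ 2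
        ≤ -J π + 1 / (2 * ρ) * ‖Lp.posPart (lam + ρ • F π)‖ ^ 2
          - 1 / (2 * ρ) * ‖lam‖ ^ 2)
    (lam' : Lp ℝ 2 μ) (hlam' : lam' = Lp.posPart (lam + ρ • F pi')) :
    ∀ m : Lp ℝ 2 μ, -d lam' + ⟪-F pi', m - lam'⟫ ≤ -d m := by
  have key : ∀ π ∈ Pi, -J pi' + ⟪lam', F pi'⟫ ≤ -J π + ⟪lam', F π⟫ := by
    intro π hπ
    have hA : 0 ≤ (-J π + ⟪lam', F π⟫) - (-J pi' + ⟪lam', F pi'⟫) := by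
      refine limit_aux _ (ρ / 2 * ‖F π - F pi'‖ ^ 2) (by positivity) ?_
      intro t ht0 ht1
      have hmem : t • π + (1 - t) • pi' ∈ Pi :=
        hPiconv hπ hpi'Pi ht0.le (by linarith) (by ring)
      have h1 := hmin _ hmem
      have h2 := hJconc π hπ pi' hpi'Pi t ht0.le ht1
      have h3 := posPart_norm_aux lam (F π) (F pi') _ ρ t hρ
        (hFconv π hπ pi' hpi'Pi t ht0.le ht1)
      rw [← hlam'] at h1 h3
      have h4 := pow_le_pow_left₀ (norm_nonneg _) h3 2
      rw [norm_add_sq_real, inner_smul_right, inner_sub_right, norm_smul, Real.norm_eq_abs,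
        mul_pow, sq_abs] at h4
      have h5 := mul_le_mul_of_nonneg_left h4 (by positivity : 0 ≤ 1 / (2 * ρ))
      have h6 : 1 / (2 * ρ) * (‖lam'‖ ^ 2 + 2 * (t * ρ * (⟪lam', F π⟫ - ⟪lam', F pi'⟫))
          + (t * ρ) ^ 2 * ‖F π - F pi'‖ ^ 2) = 1 / (2 * ρ) * ‖lam'‖ ^ 2
          + t * (⟪lam', F π⟫ - ⟪lam', F pi'⟫) + t ^ 2 * (ρ / 2 * ‖F π - F pi'‖ ^ 2) := by
        field_simp
      rw [h6] at h5
      linarith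
    linarith
  intro m
  have hd1 : -J pi' + ⟪lam', F pi'⟫ ≤ d lam' := by
    rw [hd]
    apply le_csInf (Set.Nonempty.image _ ⟨pi', hpi'Pi⟩)
    rintro _ ⟨π, hπ, rfl⟩
    exact key π hπ
  have hd2 : d m ≤ -J pi' + ⟪m, F pi'⟫ := by
    rw [hd]
    refine csInf_le ⟨-MJ - ‖m‖ * MF, ?_⟩ ⟨pi', hpi'Pi, rfl⟩
    rintro _ ⟨π, hπ, rfl⟩
    have a1 := (abs_le.mp (hMJ π hπ)).2
    have a2 := (abs_le.mp (abs_real_inner_le_norm m (F π))).1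
    have a3 := mul_le_mul_of_nonneg_left (hMF π hπ) (norm_nonneg m)
    show _ ≤ -J π + ⟪m, F π⟫
    linarith
  rw [inner_neg_left, inner_sub_right, real_inner_comm m, real_inner_comm lam']
  linarith
end

section
/- Under Assumptions 1–3, if π′ ∈ Π minimizes the augmented Lagrangian π ↦ L(π, λ, ρ) = −J(π) + (1/(2ρ))‖max{0, λ + ρF(π)}‖² − (1/(2ρ))‖λ‖² over Π for some λ ∈ H₊ and ρ > 0, and λ′ = max{0, λ + ρF(π′)} (pointwise positive part), then π′ also minimizes the standard Lagrangian π ↦ L(π, λ′) = −J(π) + ⟨λ′, F(π)⟩ over Π; consequently d(λ′) = −J(π′) + ⟨λ′, F(π′)⟩. -/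
open MeasureTheory Filter
open scoped RealInnerProductSpace

/-- under Assumptions 1–3, if `π'` minimizes the augmented Lagrangian
`π ↦ -J(π) + (1/(2ρ))‖max{0, λ + ρF(π)}‖² - (1/(2ρ))‖λ‖²` over `Π` for some `λ ∈ H₊` and
`ρ > 0`, and `λ' = max{0, λ + ρF(π')}` (pointwise positive part), then `π'` also
minimizes the standard Lagrangian `π ↦ -J(π) + ⟪λ', F(π)⟫` over `Π`; consequently
`d(λ') = -J(π') + ⟪λ', F(π')⟫`. -/
theorem stmt_4 {α : Type*} [MeasurableSpace α] {μ : Measure α}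
    {E : Type*} [NormedAddCommGroup E] [InnerProductSpace ℝ E] [CompleteSpace E]
    (Pi : Set E) (J : E → ℝ) (F : E → Lp ℝ 2 μ)
    -- Assumption 1 (boundedness)
    (MJ MF : ℝ) (hMJ : ∀ π ∈ Pi, |J π| ≤ MJ) (hMF : ∀ π ∈ Pi, ‖F π‖ ≤ MF)
    -- Assumption 2 (strong continuity along weakly convergent sequences)
    (hcont : ∀ (πseq : ℕ → E) (π : E), (∀ n, πseq n ∈ Pi) → π ∈ Pi →
      (∀ z : E, Tendsto (fun n => ⟪πseq n, z⟫) atTop (nhds ⟪π, z⟫)) →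
      Tendsto (fun n => J (πseq n)) atTop (nhds (J π)) ∧
        Tendsto (fun n => ‖F (πseq n) - F π‖) atTop (nhds 0))
    -- Assumption 3 (convexity)
    (hPiconv : Convex ℝ Pi)
    (hJconc : ∀ π₁ ∈ Pi, ∀ π₂ ∈ Pi, ∀ t : ℝ, 0 ≤ t → t ≤ 1 →
      t * J π₁ + (1 - t) * J π₂ ≤ J (t • π₁ + (1 - t) • π₂))
    (hFconv : ∀ π₁ ∈ Pi, ∀ π₂ ∈ Pi, ∀ t : ℝ, 0 ≤ t → t ≤ 1 →
      ∀ᵐ x ∂μ, F (t • π₁ + (1 - t) • π₂) x ≤ t * F π₁ x + (1 - t) * F π₂ x)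
    -- dual function
    (d : Lp ℝ 2 μ → ℝ)
    (hd : ∀ lam : Lp ℝ 2 μ, d lam = sInf ((fun π => -J π + ⟪lam, F π⟫) '' Pi))
    -- data of the statement
    (lam : Lp ℝ 2 μ) (hlam : 0 ≤ᵐ[μ] ⇑lam) (ρ : ℝ) (hρ : 0 < ρ)
    (pi' : E) (hpi'Pi : pi' ∈ Pi)
    (hmin : ∀ π ∈ Pi,
      -J pi' + 1 / (2 * ρ) * ‖Lp.posPart (lam + ρ • F pi')‖ ^ 2 - 1 / (2 * ρ) * ‖lam‖ ^ 2
        ≤ -J π + 1 / (2 * ρ) * ‖Lp.posPart (lam + ρ • F π)‖ ^ 2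
          - 1 / (2 * ρ) * ‖lam‖ ^ 2)
    (lam' : Lp ℝ 2 μ) (hlam' : lam' = Lp.posPart (lam + ρ • F pi')) :
    (∀ π ∈ Pi, -J pi' + ⟪lam', F pi'⟫ ≤ -J π + ⟪lam', F π⟫) ∧
    d lam' = -J pi' + ⟪lam', F pi'⟫ := by
  have key : ∀ π ∈ Pi, -J pi' + ⟪lam', F pi'⟫ ≤ -J π + ⟪lam', F π⟫ := by
    intro π hπ
    have main : ∀ t : ℝ, 0 < t → t ≤ 1 →
        0 ≤ (J pi' - J π + ⟪lam', F π - F pi'⟫) + t * (ρ / 2 * ‖F π - F pi'‖ ^ 2) := by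
      intro t ht0 ht1
      have hmem : t • π + (1 - t) • pi' ∈ Pi :=
        hPiconv hπ hpi'Pi ht0.le (by linarith) (by ring)
      have h1 := hmin _ hmem
      have h2 := hJconc π hπ pi' hpi'Pi t ht0.le ht1
      have h3 := hFconv π hπ pi' hpi'Pi t ht0.le ht1
      generalize t • π + (1 - t) • pi' = q at h1 h2 h3
      rw [← hlam'] at h1
      have h4 : ‖Lp.posPart (lam + ρ • F q)‖ ≤ ‖lam' + (t * ρ) • (F π - F pi')‖ := by
        apply Lp.norm_le_norm_of_ae_le
        rw [hlam']
        filter_upwards [h3, Lp.coeFn_posPart (lam + ρ • F q), Lp.coeFn_posPart (lam + ρ • F pi'),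
          Lp.coeFn_add lam (ρ • F q), Lp.coeFn_add lam (ρ • F pi'),
          Lp.coeFn_smul ρ (F q), Lp.coeFn_smul ρ (F pi'),
          Lp.coeFn_add (Lp.posPart (lam + ρ • F pi')) ((t * ρ) • (F π - F pi')),
          Lp.coeFn_smul (t * ρ) (F π - F pi'), Lp.coeFn_sub (F π) (F pi')]
          with x a1 a2 a3 a4 a5 a6 a7 a8 a9 a10
        simp only [_root_.Pi.add_apply, _root_.Pi.smul_apply, _root_.Pi.sub_apply,
          smul_eq_mul] at a1 a2 a3 a4 a5 a6 a7 a8 a9 a10 ⊢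
        rw [a2, a8, a3, a4, a5, a6, a7, a9, a10, Real.norm_eq_abs, Real.norm_eq_abs,
          abs_of_nonneg (le_max_right _ _)]
        have b1 := mul_le_mul_of_nonneg_left a1 hρ.le
        have b2 := le_max_left ((lam : α → ℝ) x + ρ * (F pi' : α → ℝ) x) 0
        apply max_le _ (abs_nonneg _)
        refine le_trans ?_ (le_abs_self _)
        nlinarith
      have h5 : ‖Lp.posPart (lam + ρ • F q)‖ ^ 2 ≤ ‖lam' + (t * ρ) • (F π - F pi')‖ ^ 2 := by
        gcongr
      rw [norm_add_sq_real, inner_smul_right, norm_smul, Real.norm_eq_abs,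
        abs_of_pos (mul_pos ht0 hρ)] at h5
      have hc : 0 ≤ 1 / (2 * ρ) := by positivity
      have h6 := mul_le_mul_of_nonneg_left h5 hc
      have h7 : 1 / (2 * ρ) * (‖lam'‖ ^ 2 + 2 * (t * ρ * ⟪lam', F π - F pi'⟫)
          + (t * ρ * ‖F π - F pi'‖) ^ 2) = 1 / (2 * ρ) * ‖lam'‖ ^ 2
          + t * (⟪lam', F π - F pi'⟫ + t * (ρ / 2 * ‖F π - F pi'‖ ^ 2)) := by
        field_simp
        ring
      rw [h7] at h6
      refine nonneg_of_mul_nonneg_right (a := t) ?_ ht0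
      linarith
    have hA : 0 ≤ J pi' - J π + ⟪lam', F π - F pi'⟫ := by
      generalize J pi' - J π + ⟪lam', F π - F pi'⟫ = A at main ⊢
      have hB : 0 ≤ ρ / 2 * ‖F π - F pi'‖ ^ 2 := by positivity
      generalize ρ / 2 * ‖F π - F pi'‖ ^ 2 = B at main hB
      have hT : Tendsto (fun t : ℝ => A + t * B) (nhdsWithin 0 (Set.Ioi 0)) (nhds (A + 0 * B)) :=
        (Continuous.tendsto (by fun_prop) 0).mono_left nhdsWithin_le_nhds
      rw [zero_mul, add_zero] at hT
      refine ge_of_tendsto hT ?_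
      filter_upwards [Ioc_mem_nhdsGT (zero_lt_one (α := ℝ))] with t ht
      exact main t ht.1 ht.2
    rw [inner_sub_right] at hA
    linarith
  refine ⟨key, ?_⟩
  rw [hd]
  refine IsLeast.csInf_eq ⟨⟨pi', hpi'Pi, rfl⟩, ?_⟩
  rintro _ ⟨π, hπ, rfl⟩
  exact key π hπ
end

section
/- Let H be a real Hilbert space and T : H → Set H a maximal monotone operator. Suppose the zero set S = {λ ∈ H : 0 ∈ T(λ)} is nonempty, and sequences (λᵏ) in H and (ρᵏ) in ℝ satisfy ρᵏ ≥ ρ₀ > 0 for all k and (λᵏ − λ^{k+1})/ρᵏ ∈ T(λ^{k+1}) for all k ≥ 0. Then (λᵏ) converges weakly to some λ* ∈ S. -/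
open Filter
open scoped RealInnerProductSpace

theorem weak_limit_aux {H : Type*} [NormedAddCommGroup H] [InnerProductSpace ℝ H]
    [CompleteSpace H] (lam : ℕ → H) (C : ℝ) (hC : ∀ k, ‖lam k‖ ≤ C) (U : Ultrafilter ℕ) :
    ∃ p : H, ∀ z : H, Tendsto (fun k => ⟪lam k, z⟫) U (nhds ⟪p, z⟫) := by
  let f : ℕ → WeakDual ℝ H := fun k =>
    StrongDual.toWeakDual (InnerProductSpace.toDual ℝ H (lam k))
  have hcomp := WeakDual.isCompact_closedBall (𝕜 := ℝ) (E := H) 0 C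
  have hmem : ∀ k, f k ∈ WeakDual.toStrongDual ⁻¹' Metric.closedBall (0 : StrongDual ℝ H) C := by
    intro k
    rw [Set.mem_preimage, mem_closedBall_zero_iff]
    refine le_trans (le_of_eq ?_) (hC k)
    exact (InnerProductSpace.toDual ℝ H).norm_map (lam k)
  obtain ⟨φ, -, hφ⟩ := hcomp.ultrafilter_le_nhds (U.map f) (by
    rw [le_principal_iff]
    exact Filter.mem_map.2 (Filter.univ_mem' hmem))
  have ht : Tendsto f U (nhds φ) := hφ
  refine ⟨(InnerProductSpace.toDual ℝ H).symm (WeakDual.toStrongDual φ), fun z => ?_⟩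
  have h1 : Tendsto (fun k => f k z) U (nhds (φ z)) :=
    ((WeakDual.eval_continuous (𝕜 := ℝ) z).tendsto φ).comp ht
  have h2 : ∀ k, f k z = ⟪lam k, z⟫ := fun k => InnerProductSpace.toDual_apply_apply
  rw [InnerProductSpace.toDual_symm_apply]
  exact h1.congr h2

/-- proximal-point iteration for a maximal monotone operator `T` on a real
Hilbert space, with penalty parameters bounded away from zero, converges weakly to a zero
of `T`, provided the zero set is nonempty. -/
theorem stmt_5 {H : Type*} [NormedAddCommGroup H] [InnerProductSpace ℝ H] [CompleteSpace H]
    (T : H → Set H)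
    (hmono : ∀ ⦃l₁ l₂ y₁ y₂ : H⦄, y₁ ∈ T l₁ → y₂ ∈ T l₂ → 0 ≤ ⟪y₁ - y₂, l₁ - l₂⟫)
    (hmax : ∀ l y : H, (∀ l' y' : H, y' ∈ T l' → 0 ≤ ⟪y - y', l - l'⟫) → y ∈ T l)
    (hS : ∃ l : H, 0 ∈ T l)
    (lam : ℕ → H) (ρ : ℕ → ℝ) (ρ₀ : ℝ) (hρ₀ : 0 < ρ₀) (hρ : ∀ k, ρ₀ ≤ ρ k)
    (hiter : ∀ k : ℕ, (ρ k)⁻¹ • (lam k - lam (k + 1)) ∈ T (lam (k + 1))) :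
    ∃ lamstar : H, 0 ∈ T lamstar ∧
      ∀ z : H, Tendsto (fun k => ⟪lam k, z⟫) atTop (nhds ⟪lamstar, z⟫) := by
  have hρpos : ∀ k, 0 < ρ k := fun k => hρ₀.trans_le (hρ k)
  have key : ∀ p, 0 ∈ T p → ∀ k,
      ‖lam (k+1) - p‖^2 + ‖lam k - lam (k+1)‖^2 ≤ ‖lam k - p‖^2 := by
    intro p hp k
    have h := hmono (hiter k) hp
    rw [sub_zero, real_inner_smul_left] at h
    have h2 : 0 ≤ ⟪lam k - lam (k+1), lam (k+1) - p⟫ :=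
      nonneg_of_mul_nonneg_right h (inv_pos.2 (hρpos k))
    have h3 := norm_add_sq_real (lam k - lam (k+1)) (lam (k+1) - p)
    rw [sub_add_sub_cancel] at h3
    linarith
  have hconv : ∀ p, 0 ∈ T p → ∃ c, Tendsto (fun k => ‖lam k - p‖^2) atTop (nhds c) := by
    intro p hp
    have ha : Antitone (fun k => ‖lam k - p‖^2) :=
      antitone_nat_of_succ_le fun k => by
        have := key p hp k
        have := sq_nonneg ‖lam k - lam (k+1)‖
        linarith
    exact ⟨_, tendsto_atTop_ciInf ha ⟨0, by rintro _ ⟨k, rfl⟩; positivity⟩⟩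
  obtain ⟨s, hs⟩ := hS
  obtain ⟨c, hc⟩ := hconv s hs
  obtain ⟨C, hC⟩ : ∃ C, ∀ k, ‖lam k‖ ≤ C := by
    refine ⟨‖lam 0 - s‖ + ‖s‖, fun k => ?_⟩
    have h1 : ‖lam k - s‖ ≤ ‖lam 0 - s‖ := by
      induction k with
      | zero => exact le_rfl
      | succ k ih =>
        refine le_trans ?_ ih
        have := key s hs k
        have := sq_nonneg ‖lam k - lam (k+1)‖
        exact le_of_sq_le_sq (by linarith) (norm_nonneg _)
    have := norm_add_le (lam k - s) s
    rw [sub_add_cancel] at this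
    linarith
  have hd2 : Tendsto (fun k => ‖lam k - lam (k+1)‖^2) atTop (nhds 0) := by
    have h1 := hc.sub (hc.comp (tendsto_add_atTop_nat 1))
    rw [sub_self] at h1
    refine squeeze_zero (fun k => by positivity) (fun k => ?_) h1
    have := key s hs k
    simp only [Function.comp]
    linarith
  have hd : Tendsto (fun k => ‖lam k - lam (k+1)‖) atTop (nhds 0) := by
    have := hd2.sqrt
    simpa using this
  have hzero : ∀ U : Ultrafilter ℕ, (U : Filter ℕ) ≤ atTop → ∀ p : H,
      (∀ z : H, Tendsto (fun k => ⟪lam k, z⟫) U (nhds ⟪p, z⟫)) → 0 ∈ T p := by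
    intro U hU p hp
    refine hmax p 0 fun l' y' hy' => ?_
    have t1 : Tendsto (fun k => ⟪(ρ k)⁻¹ • (lam k - lam (k+1)), lam (k+1) - l'⟫) atTop
        (nhds 0) := by
      have h0 : Tendsto (fun k => ρ₀⁻¹ * ‖lam k - lam (k+1)‖ * (C + ‖l'‖)) atTop (nhds 0) := by
        simpa using (hd.const_mul ρ₀⁻¹).mul_const (C + ‖l'‖)
      refine squeeze_zero_norm (fun k => ?_) h0
      refine (norm_inner_le_norm _ _).trans ?_
      have e1 : ‖(ρ k)⁻¹ • (lam k - lam (k+1))‖ ≤ ρ₀⁻¹ * ‖lam k - lam (k+1)‖ := by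
        rw [norm_smul, norm_inv, Real.norm_of_nonneg (hρpos k).le]
        have := hρ k
        gcongr
      have e2 : ‖lam (k+1) - l'‖ ≤ C + ‖l'‖ := (norm_sub_le _ _).trans (by gcongr; exact hC _)
      have := inv_pos.2 hρ₀
      exact mul_le_mul e1 e2 (norm_nonneg _) (by positivity)
    have t2 : Tendsto (fun k => ⟪lam k - lam (k+1), y'⟫) atTop (nhds 0) := by
      have h0 : Tendsto (fun k => ‖lam k - lam (k+1)‖ * ‖y'‖) atTop (nhds 0) := by
        simpa using hd.mul_const ‖y'‖
      exact squeeze_zero_norm (fun k => norm_inner_le_norm _ _) h0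
    have t3 := (((t1.mono_left hU).sub (hp y')).add (t2.mono_left hU)).add_const ⟪l', y'⟫
    have h4 := ge_of_tendsto' t3 (b := 0) (fun k => by
      have := hmono (hiter k) hy'
      rw [inner_sub_left, inner_sub_right y', real_inner_comm (lam (k+1)) y',
        real_inner_comm l' y'] at this
      rw [inner_sub_left (lam k)]
      simp only [real_inner_comm] at this ⊢
      linarith)
    rw [zero_sub, inner_neg_left, inner_sub_right, real_inner_comm p, real_inner_comm l']
    linarith [real_inner_comm p y', real_inner_comm l' y']
  have huniq : ∀ p q, 0 ∈ T p → 0 ∈ T q →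
      ∃ c, Tendsto (fun k => ⟪lam k, p - q⟫) atTop (nhds c) := by
    intro p q hp hq
    obtain ⟨a, ha⟩ := hconv p hp
    obtain ⟨b, hb⟩ := hconv q hq
    refine ⟨_, (((hb.sub ha).add_const (‖p‖^2 - ‖q‖^2)).const_mul (1/2)).congr fun k => ?_⟩
    rw [norm_sub_sq_real, norm_sub_sq_real, inner_sub_right]
    ring
  obtain ⟨U₀, hU₀⟩ := Ultrafilter.exists_le (atTop : Filter ℕ)
  obtain ⟨p, hp⟩ := weak_limit_aux lam C hC U₀
  have hpz := hzero U₀ hU₀ p hp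
  refine ⟨p, hpz, fun z => ?_⟩
  rw [tendsto_iff_ultrafilter]
  intro V hV
  obtain ⟨q, hq⟩ := weak_limit_aux lam C hC V
  have hqz := hzero V hV q hq
  obtain ⟨c, hc⟩ := huniq p q hpz hqz
  have e1 := tendsto_nhds_unique (hp (p - q)) (hc.mono_left hU₀)
  have e2 := tendsto_nhds_unique (hq (p - q)) (hc.mono_left hV)
  have e3 : ⟪p - q, p - q⟫ = 0 := by rw [inner_sub_left, e1, e2, sub_self]
  have e4 : p = q := sub_eq_zero.1 (inner_self_eq_zero.1 e3)
  rw [e4]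
  exact hq z
end

section
/- Let H be a real Hilbert space and T : H → Set H a monotone operator. Suppose λ̂ ∈ H satisfies 0 ∈ T(λ̂), and sequences (λᵏ) in H and (ρᵏ) in ℝ satisfy ρᵏ > 0 and (λᵏ − λ^{k+1})/ρᵏ ∈ T(λ^{k+1}) for all k ≥ 0. Then for every k, ‖λ^{k+1} − λ̂‖² ≤ ‖λᵏ − λ̂‖² − ‖λᵏ − λ^{k+1}‖²; consequently the sequence (‖λᵏ − λ̂‖) is nonincreasing, ∑_{k=0}^∞ ‖λᵏ − λ^{k+1}‖² ≤ ‖λ⁰ − λ̂‖², and ‖λᵏ − λ^{k+1}‖ → 0. -/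
open Filter
open scoped RealInnerProductSpace

/-- Fejér-monotonicity of the proximal-point iterates of a monotone operator
with respect to any zero `lamhat` of the operator, with square-summable successive
differences tending to zero. -/
theorem stmt_6 {H : Type*} [NormedAddCommGroup H] [InnerProductSpace ℝ H]
    (T : H → Set H)
    (hmono : ∀ ⦃l₁ l₂ y₁ y₂ : H⦄, y₁ ∈ T l₁ → y₂ ∈ T l₂ → 0 ≤ ⟪y₁ - y₂, l₁ - l₂⟫)
    (lamhat : H) (hzero : 0 ∈ T lamhat)
    (lam : ℕ → H) (ρ : ℕ → ℝ) (hρ : ∀ k, 0 < ρ k)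
    (hiter : ∀ k : ℕ, (ρ k)⁻¹ • (lam k - lam (k + 1)) ∈ T (lam (k + 1))) :
    (∀ k : ℕ, ‖lam (k + 1) - lamhat‖ ^ 2
        ≤ ‖lam k - lamhat‖ ^ 2 - ‖lam k - lam (k + 1)‖ ^ 2) ∧
    (∀ k : ℕ, ‖lam (k + 1) - lamhat‖ ≤ ‖lam k - lamhat‖) ∧
    Summable (fun k : ℕ => ‖lam k - lam (k + 1)‖ ^ 2) ∧
    (∑' k : ℕ, ‖lam k - lam (k + 1)‖ ^ 2) ≤ ‖lam 0 - lamhat‖ ^ 2 ∧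
    Tendsto (fun k : ℕ => ‖lam k - lam (k + 1)‖) atTop (nhds 0) := by
  have h1 : ∀ k : ℕ, ‖lam (k + 1) - lamhat‖ ^ 2
      ≤ ‖lam k - lamhat‖ ^ 2 - ‖lam k - lam (k + 1)‖ ^ 2 := by
    intro k
    have h := hmono (hiter k) hzero
    rw [sub_zero, real_inner_smul_left] at h
    have h' : 0 ≤ ⟪lam k - lam (k + 1), lam (k + 1) - lamhat⟫ :=
      nonneg_of_mul_nonneg_right h (inv_pos.mpr (hρ k))
    have e := norm_add_sq_real (lam k - lam (k + 1)) (lam (k + 1) - lamhat)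
    rw [sub_add_sub_cancel] at e
    linarith
  have hpart : ∀ n : ℕ, ∑ k ∈ Finset.range n, ‖lam k - lam (k + 1)‖ ^ 2
      ≤ ‖lam 0 - lamhat‖ ^ 2 - ‖lam n - lamhat‖ ^ 2 := by
    intro n
    induction n with
    | zero => simp
    | succ n ih =>
      rw [Finset.sum_range_succ]
      have := h1 n
      linarith
  have hpart' : ∀ n : ℕ, ∑ k ∈ Finset.range n, ‖lam k - lam (k + 1)‖ ^ 2
      ≤ ‖lam 0 - lamhat‖ ^ 2 := fun n => by
    have := hpart n
    have := sq_nonneg ‖lam n - lamhat‖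
    linarith
  have hs : Summable (fun k : ℕ => ‖lam k - lam (k + 1)‖ ^ 2) :=
    summable_of_sum_range_le (fun k => sq_nonneg _) hpart'
  refine ⟨h1, fun k => ?_, hs, Real.tsum_le_of_sum_range_le (fun k => sq_nonneg _) hpart', ?_⟩
  · have := h1 k
    have := sq_nonneg ‖lam k - lam (k + 1)‖
    exact (sq_le_sq₀ (norm_nonneg _) (norm_nonneg _)).mp (by linarith)
  · have := hs.tendsto_atTop_zero.sqrt
    simpa [Real.sqrt_sq (norm_nonneg _)] using this
end
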